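/- Let q be a prime power with q > 3, m ≥ q, write m - 1 = a(q-1) + b with a ≥ 1 and 0 ≤ b ≤ q-2, and let n = (q^m-1)/(q-1). Suppose 1 ≤ i ≤ n-1 is a q-cyclotomic coset leader modulo n with q-adic expansion i = Σ_{ℓ=0}^{m-1} i_ℓ q^ℓ. Then i_{m-1} = 0; moreover, setting ε = a+1 if b = q-2 and ε = a otherwise, if i_ℓ = q-1 for all m-1-ε ≤ ℓ ≤ m-2, then 1 ≤ i_{ℓ-1} ≤ i_ℓ for all 1 ≤ ℓ ≤ m-2. -/

import Mathlib

/-!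
Let `N = 1 + q + ⋯ + q ^ (m - 2)`, so that `n = q ^ (m - 1) + N = q * N + 1`. Multiplication by `q`
modulo `q ^ m - 1`, a multiple of `n`, shifts the `m` base-`q` digits of `i` cyclically. If `x` is
such a shift with leading digit `c` and `y` is the next shift, then `c * n - y = q * (c * n - x)`:
as long as the leading digit does not change, the distance to `c * n` is multiplied by `q`.

The digits assumed equal to `q - 1` give `q ^ (m - 1) - B ≤ i` with `B = q ^ (m - 1 - ε)`, and `i`
is a coset leader, so no shift lies in `[k * n, k * n + q ^ (m - 1) - B)` for any `k`. Hence a shift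
with leading digit `c ≠ 0` lies just below `c * n`, and the leading digits never increase except
after a `0`. After a `0`, or after a drop of the leading digit, the distance to the new multiple of
`n` is less than `q * B`, so each of the values `q - 1, …, 1` lasts for `ε` shifts, up to one shift
for the value `1`, and two zeros among the leading digits are at least `(q - 1) * ε` places apart.
As `m < 2 * ((q - 1) * ε)`, the digit `i_{m-1} = 0` is the only zero in the cyclic word.
-/

section Repunit

/-- The repunit `1 + q + ⋯ + q ^ (m - 1)`, equal to `(q ^ m - 1) / (q - 1)` for `2 ≤ q`: the
modulus of the cyclotomic cosets, written without division. -/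
def repunit (q m : ℕ) : ℕ := ∑ k ∈ Finset.range m, q ^ k

variable {q : ℕ}

theorem repunit_succ (q m : ℕ) : repunit q (m + 1) = q ^ m + repunit q m := geom_sum_succ'

theorem repunit_succ' (q m : ℕ) : repunit q (m + 1) = q * repunit q m + 1 := geom_sum_succ

theorem repunit_eq_div (hq : 2 ≤ q) (m : ℕ) : repunit q m = (q ^ m - 1) / (q - 1) :=
  Nat.geomSum_eq hq m

theorem pow_add_repunit (q m : ℕ) : q ^ m + repunit q m = q * repunit q m + 1 := by
  rw [← repunit_succ, repunit_succ']

theorem repunit_dvd_pow_sub_one (q m : ℕ) : repunit q m ∣ q ^ m - 1 := by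
  refine ⟨q - 1, ?_⟩
  rw [Nat.mul_sub_one, mul_comm]
  have := pow_add_repunit q m
  omega

theorem mul_repunit_lt_pow {c : ℕ} (hc : c < q) (m : ℕ) : c * repunit q m < q ^ m := by
  have hcq : (c + 1) * repunit q m ≤ q * repunit q m := Nat.mul_le_mul_right _ hc
  have := pow_add_repunit q m
  linarith

theorem le_repunit_of_mul_le_pow {X m : ℕ} (hq : 1 < q) (hX : q * X ≤ q ^ m) :
    X ≤ repunit q m := by
  by_contra! hlt
  have hmul : q * (repunit q m + 1) ≤ q * X := Nat.mul_le_mul_left q hlt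
  have := pow_add_repunit q m
  linarith

end Repunit

section CyclicShift

variable {q m i j : ℕ}

theorem lt_pow_succ_sub_one (hq : 1 < q) (hi : i < q ^ m) : i < q ^ (m + 1) - 1 := by
  have : 2 * q ^ m ≤ q ^ m * q := by rw [mul_comm]; exact Nat.mul_le_mul_left _ hq
  rw [pow_succ]
  omega

theorem mul_pow_div_pow_sub_one {k : ℕ} (hq : 0 < q) (hk : k ≤ m) (hi : i < q ^ m - 1) :
    i * q ^ k / (q ^ m - 1) = i / q ^ (m - k) := by
  obtain ⟨L, hL⟩ : ∃ L, q ^ m = L + 1 := ⟨q ^ m - 1, by omega⟩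
  rw [hL, Nat.add_sub_cancel] at hi ⊢
  have hqm : q ^ (m - k) * q ^ k = L + 1 := by rw [← pow_add, Nat.sub_add_cancel hk, hL]
  have hqk : 0 < q ^ k := Nat.pow_pos hq
  set A := i / q ^ (m - k)
  have hlower : A * q ^ (m - k) ≤ i := Nat.div_mul_le_self _ _
  have hupper : i < A * q ^ (m - k) + q ^ (m - k) := Nat.lt_div_mul_add (Nat.pow_pos hq)
  have hA : A < q ^ k := Nat.div_lt_of_lt_mul (by omega)
  refine Nat.div_eq_of_lt_le ?_ ?_
  · calc A * L ≤ A * (q ^ (m - k) * q ^ k) := Nat.mul_le_mul_left _ (by omega)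
      _ = A * q ^ (m - k) * q ^ k := (mul_assoc ..).symm
      _ ≤ i * q ^ k := Nat.mul_le_mul_right _ hlower
  · rcases (Nat.succ_le_of_lt hA).lt_or_eq with hlt | heq
    · have : (i + 1) * q ^ k ≤ (A + 1) * (L + 1) := by
        rw [← hqm, ← mul_assoc]
        exact Nat.mul_le_mul_right _ (by linarith)
      linarith
    · -- the top `k` digits of `i` are all `q - 1`
      rw [← Nat.succ_eq_add_one, heq, mul_comm]
      exact Nat.mul_lt_mul_of_pos_left hi hqk

/-- The cyclic shift by `j` places, towards the leading end, of the word of the `m` base-`q` digits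
of `i`, read as a number congruent to `i * q ^ j` modulo `repunit q m`. The formula gives the shift
for `i < q ^ m - 1`, while the word with all digits equal to `q - 1` is read as `0`. -/
def cyclicShift (q m i j : ℕ) : ℕ := i * q ^ j % (q ^ m - 1)

theorem cyclicShift_lt (hq : 1 < q) (hm : m ≠ 0) (i j : ℕ) : cyclicShift q m i j < q ^ m - 1 :=
  Nat.mod_lt _ (Nat.sub_pos_of_lt (Nat.one_lt_pow hm hq))

theorem cyclicShift_lt_pow (hq : 1 < q) (hm : m ≠ 0) (i j : ℕ) : cyclicShift q m i j < q ^ m :=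
  (cyclicShift_lt hq hm i j).trans_le (Nat.sub_le _ _)

theorem mul_cyclicShift (hq : 1 < q) (hm : m ≠ 0) (i j : ℕ) :
    q * cyclicShift q m i j =
      cyclicShift q m i j / q ^ (m - 1) * (q ^ m - 1) + cyclicShift q m i (j + 1) := by
  have hdiv := mul_pow_div_pow_sub_one (k := 1) (by omega) (by omega) (cyclicShift_lt hq hm i j)
  have hmod : q * cyclicShift q m i j % (q ^ m - 1) = cyclicShift q m i (j + 1) := by
    rw [cyclicShift, cyclicShift, Nat.mul_mod_mod, pow_succ, mul_comm q, mul_assoc]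
  rw [← hdiv, ← hmod, pow_one, mul_comm (cyclicShift q m i j), Nat.div_add_mod']

theorem cyclicShift_zero (hi : i < q ^ m - 1) : cyclicShift q m i 0 = i := by
  rw [cyclicShift, pow_zero, mul_one, Nat.mod_eq_of_lt hi]

theorem cyclicShift_self (hi : i < q ^ m - 1) : cyclicShift q m i m = i := by
  have hmod : q ^ m % (q ^ m - 1) = 1 % (q ^ m - 1) := Nat.modEq_sub (by omega)
  rw [cyclicShift, Nat.mul_mod, hmod, ← Nat.mul_mod, mul_one, Nat.mod_eq_of_lt hi]

theorem cyclicShift_div_pow (hq : 1 < q) (hj : j < m) (hi : i < q ^ m - 1) :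
    cyclicShift q m i j / q ^ (m - 1) = i / q ^ (m - (j + 1)) % q := by
  have hm : m ≠ 0 := by omega
  have hlt := cyclicShift_lt hq hm i j
  have hdigit : cyclicShift q m i j / q ^ (m - 1) < q := by
    refine Nat.div_lt_of_lt_mul ?_
    rw [← pow_succ, Nat.sub_add_cancel (by omega)]
    omega
  have hsplit : i * q ^ (j + 1) =
      (q ^ m - 1) * (q * (i * q ^ j / (q ^ m - 1))) + cyclicShift q m i j * q ^ 1 := by
    calc i * q ^ (j + 1) = q * (i * q ^ j) := by ring
      _ = q * ((q ^ m - 1) * (i * q ^ j / (q ^ m - 1)) + cyclicShift q m i j) := by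
        rw [cyclicShift, Nat.div_add_mod]
      _ = _ := by ring
  rw [← mul_pow_div_pow_sub_one (by omega) hj hi, hsplit, Nat.mul_add_div (by omega),
    mul_pow_div_pow_sub_one (by omega) (by omega) hlt, Nat.mul_add_mod, Nat.mod_eq_of_lt hdigit]

theorem cyclicShift_mod_repunit (q m i j : ℕ) :
    cyclicShift q m i j % repunit q m = i * q ^ j % repunit q m :=
  Nat.mod_mod_of_dvd _ (repunit_dvd_pow_sub_one q m)

theorem cyclicShift_succ_add (hq : 1 < q) (m i j : ℕ) :
    cyclicShift q (m + 1) i (j + 1) +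
        q * (cyclicShift q (m + 1) i j / q ^ m * repunit q (m + 1)) =
      q * cyclicShift q (m + 1) i j + cyclicShift q (m + 1) i j / q ^ m * repunit q (m + 1) := by
  have hstep := mul_cyclicShift hq m.add_one_ne_zero i j
  have hrep := pow_add_repunit q (m + 1)
  obtain ⟨L, hL⟩ : ∃ L, q ^ (m + 1) = L + 1 :=
    Nat.exists_eq_add_of_le' (Nat.pow_pos (Nat.zero_lt_of_lt hq))
  rw [hL, Nat.add_sub_cancel, Nat.add_sub_cancel] at hstep
  rw [hL] at hrep
  rw [hstep]
  linear_combination cyclicShift q (m + 1) i j / q ^ m * hrep.symm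

end CyclicShift

section LeadingDigit

variable {q M B x : ℕ}

theorem div_repunit_add_one (hq : 1 < q) (hB : q * B ≤ q ^ M) (hx : x < q ^ (M + 1))
    (hgap : q ^ M ≤ x % repunit q (M + 1) + B) (hc : x / q ^ M ≠ 0) :
    x / repunit q (M + 1) + 1 = x / q ^ M := by
  have hn := repunit_succ q M
  have hBN : B ≤ repunit q M := le_repunit_of_mul_le_pow hq hB
  have hnpos : 0 < repunit q (M + 1) := by rw [repunit_succ']; omega
  have hQpos : 0 < q ^ M := Nat.pow_pos (by omega)
  have hdivmod := Nat.div_add_mod' x (repunit q (M + 1))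
  refine le_antisymm ?_ ?_
  · by_contra! hlt
    have hN : repunit q M ≤ x / q ^ M * repunit q M :=
      Nat.le_mul_of_pos_left _ (Nat.pos_of_ne_zero hc)
    have hmul : x / q ^ M * q ^ M + x / q ^ M * repunit q M ≤
        x / repunit q (M + 1) * repunit q (M + 1) := by
      rw [← mul_add, ← hn]
      exact Nat.mul_le_mul_right _ (Nat.le_of_lt_succ hlt)
    have := Nat.lt_div_mul_add (a := x) hQpos
    omega
  · by_contra! hlt
    have hdigit : x / q ^ M < q := Nat.div_lt_of_lt_mul (by rwa [← pow_succ])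
    have hN := mul_repunit_lt_pow (hlt.trans hdigit) M
    have hmul : (x / repunit q (M + 1) + 1 + 1) * q ^ M ≤ x / q ^ M * q ^ M :=
      Nat.mul_le_mul_right _ hlt
    have hx_lt := Nat.lt_div_mul_add (a := x) hnpos
    have hx_ge := Nat.div_mul_le_self x (q ^ M)
    rw [hn] at hN hmul hx_lt
    linarith

theorem lt_leadingDigit_mul_repunit (hq : 1 < q) (hB : q * B ≤ q ^ M) (hx : x < q ^ (M + 1))
    (hgap : q ^ M ≤ x % repunit q (M + 1) + B) (hc : x / q ^ M ≠ 0) :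
    x < x / q ^ M * repunit q (M + 1) := by
  rw [← div_repunit_add_one hq hB hx hgap hc, mul_comm]
  exact Nat.lt_mul_div_succ x (by rw [repunit_succ']; omega)

theorem leadingDigit_mul_repunit_le (hq : 1 < q) (hB : q * B ≤ q ^ M) (hx : x < q ^ (M + 1))
    (hgap : q ^ M ≤ x % repunit q (M + 1) + B) (hc : x / q ^ M ≠ 0) :
    x / q ^ M * repunit q (M + 1) ≤ x + repunit q M + B := by
  rw [← div_repunit_add_one hq hB hx hgap hc, add_mul, one_mul]
  have := Nat.div_add_mod' x (repunit q (M + 1))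
  have := repunit_succ q M
  omega

end LeadingDigit

section Shifts

variable {q M B ε i j K : ℕ}

theorem leadingDigit_cyclicShift_succ_le (hq : 1 < q) (hB : q * B ≤ q ^ M)
    (hgap : q ^ M ≤ cyclicShift q (M + 1) i j % repunit q (M + 1) + B)
    (hc : cyclicShift q (M + 1) i j / q ^ M ≠ 0) :
    cyclicShift q (M + 1) i (j + 1) / q ^ M ≤ cyclicShift q (M + 1) i j / q ^ M := by
  have hlt := cyclicShift_lt_pow hq M.add_one_ne_zero i j
  have hstep := cyclicShift_succ_add hq M i j
  have hbelow := lt_leadingDigit_mul_repunit hq hB hlt hgap hc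
  set c := cyclicShift q (M + 1) i j / q ^ M
  have hdigit : c * repunit q M < q ^ M :=
    mul_repunit_lt_pow (Nat.div_lt_of_lt_mul (by rwa [← pow_succ])) M
  have hscaled := Nat.mul_lt_mul_of_pos_left hbelow (Nat.zero_lt_of_lt hq)
  refine Nat.le_of_lt_succ (Nat.div_lt_of_lt_mul ?_)
  calc cyclicShift q (M + 1) i (j + 1) < c * repunit q (M + 1) := by omega
    _ = c * q ^ M + c * repunit q M := by rw [repunit_succ, mul_add]
    _ < c * q ^ M + q ^ M := by omega
    _ = q ^ M * (c + 1) := by ring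

-- A distance less than `X` below `K * repunit q (M + 1)` is written additively as
-- `K * repunit q (M + 1) < x + X`, which leaves open whether the shift `x` is below it at all.

theorem mul_repunit_lt_cyclicShift_succ_of_leadingDigit (hq : 1 < q) (hB : q * B ≤ q ^ M)
    (hgap : q ^ M ≤ cyclicShift q (M + 1) i j % repunit q (M + 1) + B) (hK : K < q)
    (hc : cyclicShift q (M + 1) i j / q ^ M = 0 ∨ K < cyclicShift q (M + 1) i j / q ^ M) :
    K * repunit q (M + 1) < cyclicShift q (M + 1) i (j + 1) + q * B := by
  have hlt := cyclicShift_lt_pow hq M.add_one_ne_zero i j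
  have hstep := cyclicShift_succ_add hq M i j
  by_cases hc0 : cyclicShift q (M + 1) i j / q ^ M = 0
  · have hltQ : cyclicShift q (M + 1) i j < q ^ M :=
      (Nat.div_eq_zero_iff_lt (Nat.pow_pos (by omega))).mp hc0
    rw [Nat.mod_eq_of_lt (by rw [repunit_succ]; omega)] at hgap
    calc K * repunit q (M + 1) < q ^ (M + 1) := mul_repunit_lt_pow hK _
      _ ≤ q * (cyclicShift q (M + 1) i j + B) := by rw [pow_succ']; exact Nat.mul_le_mul_left q hgap
      _ = cyclicShift q (M + 1) i (j + 1) + q * B := by rw [hc0] at hstep; linarith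
  · have hnear := Nat.mul_le_mul_left q (leadingDigit_mul_repunit_le hq hB hlt hgap hc0)
    have hKc : (K + 1) * repunit q (M + 1) ≤
        cyclicShift q (M + 1) i j / q ^ M * repunit q (M + 1) :=
      Nat.mul_le_mul_right _ (by omega)
    have := repunit_succ' q M
    linarith

theorem mul_repunit_lt_cyclicShift_succ_of_lt {X : ℕ} (hq : 1 < q) (hB : q * B ≤ q ^ M)
    (hBX : B ≤ X) (hgap : q ^ M ≤ cyclicShift q (M + 1) i j % repunit q (M + 1) + B) (hK : K < q)
    (hKj : K * repunit q (M + 1) < cyclicShift q (M + 1) i j + X) :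
    K * repunit q (M + 1) < cyclicShift q (M + 1) i (j + 1) + q * X := by
  by_cases hc : cyclicShift q (M + 1) i j / q ^ M = 0 ∨ K < cyclicShift q (M + 1) i j / q ^ M
  · exact (mul_repunit_lt_cyclicShift_succ_of_leadingDigit hq hB hgap hK hc).trans_le (by gcongr)
  · have hstep := cyclicShift_succ_add hq M i j
    have hscaled := Nat.mul_lt_mul_of_pos_left hKj (Nat.zero_lt_of_lt hq)
    obtain ⟨p, rfl⟩ : ∃ p, q = p + 1 := ⟨q - 1, by omega⟩
    have hcK : p * (cyclicShift (p + 1) (M + 1) i j / (p + 1) ^ M * repunit (p + 1) (M + 1)) ≤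
        p * (K * repunit (p + 1) (M + 1)) := by gcongr; omega
    linarith

theorem mul_repunit_lt_cyclicShift_succ_of_succ_mul_lt (hq : 1 < q) (hB : q * B ≤ q ^ M)
    (hgap : q ^ M ≤ cyclicShift q (M + 1) i j % repunit q (M + 1) + B) (hK : K < q)
    (hKj : (K + 1) * repunit q (M + 1) < cyclicShift q (M + 1) i j + q ^ M) :
    K * repunit q (M + 1) < cyclicShift q (M + 1) i (j + 1) + q * B := by
  refine mul_repunit_lt_cyclicShift_succ_of_leadingDigit hq hB hgap hK ?_
  by_contra! ⟨hc, hcK⟩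
  have hlt := cyclicShift_lt_pow hq M.add_one_ne_zero i j
  have hbelow := lt_leadingDigit_mul_repunit hq hB hlt hgap hc
  have hle : cyclicShift q (M + 1) i j / q ^ M * repunit q (M + 1) ≤ K * repunit q (M + 1) :=
    Nat.mul_le_mul_right _ hcK
  have := repunit_succ q M
  linarith

theorem mul_le_of_pow_mul_le {C : ℕ} (hε : 0 < ε) (hB : q ^ ε * B ≤ C) : q * B ≤ C :=
  (Nat.mul_le_mul_right B (Nat.le_self_pow hε.ne' q)).trans hB

theorem mul_repunit_lt_cyclicShift_add (hq : 1 < q) (hB : q * B ≤ q ^ M)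
    (hgap : ∀ j, q ^ M ≤ cyclicShift q (M + 1) i j % repunit q (M + 1) + B) (hK : K < q)
    (hKj : K * repunit q (M + 1) < cyclicShift q (M + 1) i j + q * B) (t : ℕ) :
    K * repunit q (M + 1) < cyclicShift q (M + 1) i (j + t) + q ^ (t + 1) * B := by
  induction t with
  | zero => simpa using hKj
  | succ t ih =>
    rw [pow_succ' q (t + 1), mul_assoc]
    exact mul_repunit_lt_cyclicShift_succ_of_lt hq hB
      (Nat.le_mul_of_pos_left B (Nat.pow_pos (by omega))) (hgap _) hK ih

theorem mul_repunit_lt_cyclicShift_of_leadingDigit_eq_zero (hq : 1 < q) (hε : 0 < ε)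
    (hB : q ^ ε * B ≤ q ^ M)
    (hgap : ∀ j, q ^ M ≤ cyclicShift q (M + 1) i j % repunit q (M + 1) + B)
    (hj : cyclicShift q (M + 1) i j / q ^ M = 0) (r : ℕ) (hrK : r + K + 1 = q) :
    K * repunit q (M + 1) < cyclicShift q (M + 1) i (j + 1 + r * ε) + q * B := by
  have hqB : q * B ≤ q ^ M := mul_le_of_pow_mul_le hε hB
  induction r generalizing K with
  | zero =>
    rw [Nat.zero_mul]
    exact mul_repunit_lt_cyclicShift_succ_of_leadingDigit hq hqB (hgap j) (by omega) (Or.inl hj)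
  | succ r ih =>
    have hrun := mul_repunit_lt_cyclicShift_add hq hqB hgap (by omega)
      (ih (K := K + 1) (by omega)) (ε - 1)
    have hdrop := mul_repunit_lt_cyclicShift_succ_of_succ_mul_lt hq hqB (hgap _) (by omega)
      (hrun.trans_le (by rw [Nat.sub_add_cancel hε]; gcongr))
    rwa [add_assoc _ (ε - 1), Nat.sub_add_cancel hε, add_assoc (j + 1), ← Nat.succ_mul] at hdrop

theorem leadingDigit_ne_zero_of_leadingDigit_eq_zero (hq : 1 < q) (hε : 0 < ε)
    (hB : q ^ ε * B ≤ q ^ M)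
    (hgap : ∀ j, q ^ M ≤ cyclicShift q (M + 1) i j % repunit q (M + 1) + B)
    (hj : cyclicShift q (M + 1) i j / q ^ M = 0) {s : ℕ} (hs : s + 1 < (q - 1) * ε) :
    cyclicShift q (M + 1) i (j + 1 + s) / q ^ M ≠ 0 := by
  obtain ⟨r, t, ht, rfl⟩ : ∃ r t, t < ε ∧ s = r * ε + t :=
    ⟨s / ε, s % ε, Nat.mod_lt s hε, (Nat.div_add_mod' s ε).symm⟩
  have hr : r < q - 1 := Nat.lt_of_mul_lt_mul_right (a := ε) (by omega)
  obtain ⟨K, hK⟩ : ∃ K, r + (K + 1) + 1 = q := ⟨q - 2 - r, by omega⟩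
  intro hzero
  have hlt : cyclicShift q (M + 1) i (j + 1 + (r * ε + t)) < q ^ M :=
    (Nat.div_eq_zero_iff_lt (Nat.pow_pos (by omega))).mp hzero
  have hqB : q * B ≤ q ^ M := mul_le_of_pow_mul_le hε hB
  have hnear := mul_repunit_lt_cyclicShift_add hq hqB hgap (by omega)
    (mul_repunit_lt_cyclicShift_of_leadingDigit_eq_zero hq hε hB hgap hj r hK) t
  rw [add_assoc (j + 1)] at hnear
  have hn := repunit_succ q M
  rcases K.eq_zero_or_pos with rfl | hKpos
  · have ht_last : t + 1 < ε := by
      rw [show q - 1 = r + 1 by omega, add_mul] at hs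
      omega
    have hqX : q * (q ^ (t + 1) * B) ≤ q ^ M := by
      rw [← mul_assoc, ← pow_succ']
      exact (Nat.mul_le_mul_right B (Nat.pow_le_pow_right (by omega) ht_last)).trans hB
    have := le_repunit_of_mul_le_pow hq hqX
    omega
  · have hX : q ^ (t + 1) * B ≤ q ^ M :=
      (Nat.mul_le_mul_right B (Nat.pow_le_pow_right (by omega) ht)).trans hB
    have htwo : 2 * repunit q (M + 1) ≤ (K + 1) * repunit q (M + 1) :=
      Nat.mul_le_mul_right _ (by omega)
    omega

theorem leadingDigit_ne_zero (hq : 1 < q) (hε : 0 < ε) (hB : q ^ ε * B ≤ q ^ M)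
    (hgap : ∀ j, q ^ M ≤ cyclicShift q (M + 1) i j % repunit q (M + 1) + B)
    (hi : i < q ^ M) (hlen : M + 1 < 2 * ((q - 1) * ε)) (hj : 0 < j) (hjM : j ≤ M) :
    cyclicShift q (M + 1) i j / q ^ M ≠ 0 := by
  intro hzero
  have hi' := lt_pow_succ_sub_one hq hi
  have hstart : cyclicShift q (M + 1) i 0 / q ^ M = 0 := by
    rw [cyclicShift_zero hi', Nat.div_eq_of_lt hi]
  have hend : cyclicShift q (M + 1) i (M + 1) / q ^ M = 0 := by
    rw [cyclicShift_self hi', Nat.div_eq_of_lt hi]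
  have hbefore : (q - 1) * ε ≤ j := by
    by_contra! hlt
    exact leadingDigit_ne_zero_of_leadingDigit_eq_zero hq hε hB hgap hstart (s := j - 1) (by omega)
      (by rwa [show 0 + 1 + (j - 1) = j by omega])
  exact leadingDigit_ne_zero_of_leadingDigit_eq_zero hq hε hB hgap hzero (s := M - j) (by omega)
    (by rwa [show j + 1 + (M - j) = M + 1 by omega])

theorem digit_pos_and_le_succ_digit (hq : 1 < q) (hε : 0 < ε) (hB : q ^ ε * B ≤ q ^ M)
    (hgap : ∀ j, q ^ M ≤ i * q ^ j % repunit q (M + 1) + B)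
    (hi : i < q ^ M) (hlen : M + 1 < 2 * ((q - 1) * ε)) {k : ℕ} (hk : k + 1 < M) :
    1 ≤ i / q ^ k % q ∧ i / q ^ k % q ≤ i / q ^ (k + 1) % q := by
  have hi' := lt_pow_succ_sub_one hq hi
  have hshift : ∀ j, q ^ M ≤ cyclicShift q (M + 1) i j % repunit q (M + 1) + B := fun j => by
    rw [cyclicShift_mod_repunit]
    exact hgap j
  have hdigit : ∀ j l, j + l = M → cyclicShift q (M + 1) i j / q ^ M = i / q ^ l % q := by
    intro j l hjl
    have := cyclicShift_div_pow hq (show j < M + 1 by omega) hi'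
    rwa [Nat.add_sub_cancel, show M + 1 - (j + 1) = l by omega] at this
  rw [← hdigit (M - k) k (by omega), ← hdigit (M - (k + 1)) (k + 1) (by omega),
    show M - k = M - (k + 1) + 1 by omega]
  have hne : ∀ {j}, 0 < j → j ≤ M → cyclicShift q (M + 1) i j / q ^ M ≠ 0 :=
    leadingDigit_ne_zero hq hε hB hshift hi hlen
  exact ⟨Nat.pos_of_ne_zero (hne (by omega) (by omega)),
    leadingDigit_cyclicShift_succ_le hq (mul_le_of_pow_mul_le hε hB) (hshift _)
      (hne (by omega) (by omega))⟩

end Shifts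

section CosetLeader

variable {q M i : ℕ}

theorem lt_pow_of_le_mul_mod_repunit (hq : 1 < q) (hi : i < repunit q (M + 1))
    (hlead : i ≤ i * q % repunit q (M + 1)) : i < q ^ M := by
  by_contra! hle
  obtain ⟨r, rfl⟩ := Nat.exists_eq_add_of_le hle
  have hn := repunit_succ q M
  have hn' := repunit_succ' q M
  obtain ⟨p, rfl⟩ : ∃ p, q = p + 1 := ⟨q - 1, by omega⟩
  have hr : r + 1 ≤ repunit (p + 1) M := by omega
  have hscaled : (p + 1) * (r + 1) ≤ (p + 1) * repunit (p + 1) M := Nat.mul_le_mul_left _ hr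
  have hmod : ((p + 1) ^ M + r) * (p + 1) % repunit (p + 1) (M + 1) = (p + 1) * r + 1 := by
    have hsplit : ((p + 1) ^ M + r) * (p + 1) =
        (p + 1) * r + 1 + repunit (p + 1) (M + 1) * p := by
      have := pow_add_repunit (p + 1) (M + 1)
      rw [pow_succ] at this
      linarith
    rw [hsplit, Nat.add_mul_mod_self_left, Nat.mod_eq_of_lt (by linarith)]
  rw [hmod] at hlead
  have hp : p * (r + 1) ≤ p * repunit (p + 1) M := Nat.mul_le_mul_left _ hr
  linarith

theorem pow_le_mod_pow_add_of_digits_eq {s t : ℕ} (hq : 0 < q)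
    (hdigits : ∀ k, s ≤ k → k < s + t → i / q ^ k % q = q - 1) :
    q ^ (s + t) ≤ i % q ^ (s + t) + q ^ s := by
  induction t with
  | zero => simp
  | succ t ih =>
    have hind := ih fun k hsk hkt => hdigits k hsk (by omega)
    rw [← add_assoc, Nat.mod_pow_succ, hdigits (s + t) (by omega) (by omega), pow_succ,
      Nat.mul_sub_one]
    have : q ^ (s + t) ≤ q ^ (s + t) * q := Nat.le_mul_of_pos_right _ hq
    omega

end CosetLeader

theorem runLength_bounds {q M a b ε : ℕ} (hq : 2 < q) (ha : 1 ≤ a) (hb : b ≤ q - 2)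
    (hM : M = a * (q - 1) + b) (hε : ε = if b = q - 2 then a + 1 else a) :
    0 < ε ∧ ε ≤ M ∧ M + 1 < 2 * ((q - 1) * ε) := by
  have hle : a * 2 ≤ a * (q - 1) := Nat.mul_le_mul_left _ (by omega)
  have hge : q - 1 ≤ a * (q - 1) := Nat.le_mul_of_pos_left _ ha
  subst hε
  rw [mul_comm (q - 1)]
  split_ifs
  · rw [add_mul]
    omega
  · omega

theorem stmt_15_general (q m a b n i : ℕ) (hq : 2 < q) (ha : 1 ≤ a) (hb : b ≤ q - 2)
    (hab : m - 1 = a * (q - 1) + b) (hn : n = (q ^ m - 1) / (q - 1)) (hi : i ≤ n - 1)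
    (hleader : ∀ j : ℕ, i ≤ i * q ^ j % n) :
    (i / q ^ (m - 1)) % q = 0 ∧
    (let ε : ℕ := if b = q - 2 then a + 1 else a
     (∀ ℓ : ℕ, m - 1 - ε ≤ ℓ → ℓ ≤ m - 2 → (i / q ^ ℓ) % q = q - 1) →
      ∀ ℓ : ℕ, 1 ≤ ℓ → ℓ ≤ m - 2 →
        1 ≤ (i / q ^ (ℓ - 1)) % q ∧ (i / q ^ (ℓ - 1)) % q ≤ (i / q ^ ℓ) % q) := by
  obtain ⟨M, rfl⟩ : ∃ M, m = M + 1 := ⟨m - 1, by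
    have : q - 1 ≤ a * (q - 1) := Nat.le_mul_of_pos_left _ ha
    omega⟩
  rw [← repunit_eq_div hq.le] at hn
  subst hn
  rw [Nat.add_sub_cancel] at hab ⊢
  have hlt : i < q ^ M := by
    refine lt_pow_of_le_mul_mod_repunit (by omega) ?_ (by simpa using hleader 1)
    have := repunit_succ' q M
    omega
  refine ⟨by rw [Nat.div_eq_of_lt hlt, Nat.zero_mod], ?_⟩
  intro ε hdigits ℓ hℓ hℓM
  obtain ⟨hε, hεM, hlen⟩ := runLength_bounds hq ha hb hab (ε := ε) rfl
  have hgap : q ^ M ≤ i + q ^ (M - ε) := by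
    have := pow_le_mod_pow_add_of_digits_eq (i := i) (s := M - ε) (t := ε) (by omega)
      fun k hk hkM => hdigits k hk (by omega)
    rwa [Nat.sub_add_cancel hεM, Nat.mod_eq_of_lt hlt] at this
  obtain ⟨k, rfl⟩ := Nat.exists_eq_add_of_le' hℓ
  exact digit_pos_and_le_succ_digit (by omega) hε (pow_mul_pow_sub q hεM).le
    (fun j => hgap.trans (Nat.add_le_add_right (hleader j) _)) hlt hlen (by omega)

/-- For q > 3, m ≥ q, m-1 = a(q-1)+b, n = (q^m-1)/(q-1): if i is a q-cyclotomic
coset leader modulo n with q-adic digits i_ℓ = (i / q^ℓ) % q, then i_{m-1} = 0;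
moreover, with ε = a+1 if b = q-2 and ε = a otherwise, if i_ℓ = q-1 for all
m-1-ε ≤ ℓ ≤ m-2, then 1 ≤ i_{ℓ-1} ≤ i_ℓ for all 1 ≤ ℓ ≤ m-2. -/
theorem stmt_15 (q m a b n i : ℕ) (hq : ∃ p k : ℕ, p.Prime ∧ 0 < k ∧ q = p ^ k)
    (hq3 : 3 < q) (hmq : q ≤ m) (ha : 1 ≤ a) (hb : b ≤ q - 2)
    (hab : m - 1 = a * (q - 1) + b)
    (hn : n = (q ^ m - 1) / (q - 1))
    (hi1 : 1 ≤ i) (hi2 : i ≤ n - 1)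
    (hleader : ∀ j : ℕ, i ≤ i * q ^ j % n) :
    (i / q ^ (m - 1)) % q = 0 ∧
    (let ε : ℕ := if b = q - 2 then a + 1 else a
     (∀ ℓ : ℕ, m - 1 - ε ≤ ℓ → ℓ ≤ m - 2 → (i / q ^ ℓ) % q = q - 1) →
      ∀ ℓ : ℕ, 1 ≤ ℓ → ℓ ≤ m - 2 →
        1 ≤ (i / q ^ (ℓ - 1)) % q ∧ (i / q ^ (ℓ - 1)) % q ≤ (i / q ^ ℓ) % q) :=
  stmt_15_general q m a b n i (by omega) ha hb hab hn hi2 hleader
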